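/- arXiv:1704.05377 — 2 statements merged into one kernel-verified Lean document; each statement's English description precedes it below -/
import Mathlib

section
/- For every x₀ ∈ (0,π), the series K(t,s) := −Σ_{n≥1} n² f_n(s) e^{-n²(t-s)} sin(n x₀) converges uniformly on the triangle {(t,s) : 0 ≤ s ≤ t ≤ T}, and the function K is continuous there. -/
open Real Set

noncomputable section

lemma vk_int_cos (k : ℤ) (hk : k ≠ 0) : ∫ x in (0:ℝ)..π, cos ((k:ℝ) * x) = 0 := by
  have hk' : (k:ℝ) ≠ 0 := by exact_mod_cast hk
  rw [intervalIntegral.integral_comp_mul_left (fun x => cos x) hk', integral_cos]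
  simp [sin_int_mul_pi]

lemma vk_orth (n m : ℕ) : ∫ x in (0:ℝ)..π, cos (((n:ℝ)+1) * x) * cos (((m:ℝ)+1) * x)
    = if n = m then π / 2 else 0 := by
  have h : ∀ x : ℝ, cos (((n:ℝ)+1) * x) * cos (((m:ℝ)+1) * x)
      = (1/2) * (cos ((((n:ℤ) - m : ℤ):ℝ) * x) + cos ((((n:ℤ) + m + 2 : ℤ):ℝ) * x)) := by
    intro x
    push_cast
    have e1 : ((n:ℝ) - m) * x = ((n:ℝ)+1) * x - ((m:ℝ)+1) * x := by ring
    have e2 : ((n:ℝ) + m + 2) * x = ((n:ℝ)+1) * x + ((m:ℝ)+1) * x := by ring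
    rw [e1, e2, cos_sub, cos_add]; ring
  simp_rw [h]
  rw [intervalIntegral.integral_const_mul, intervalIntegral.integral_add
    (Continuous.intervalIntegrable (by fun_prop) _ _)
    (Continuous.intervalIntegrable (by fun_prop) _ _), vk_int_cos ((n:ℤ)+m+2) (by omega)]
  split_ifs with hnm
  · subst hnm; simp; ring
  · rw [vk_int_cos _ (by omega)]; simp

lemma vk_h2 (S : Finset ℕ) (c : ℕ → ℝ) :
    ∫ x in (0:ℝ)..π, (∑ n ∈ S, c n * cos (((n:ℝ)+1) * x)) ^ 2 = π / 2 * ∑ n ∈ S, c n ^ 2 := by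
  have h : ∀ x : ℝ, (∑ n ∈ S, c n * cos (((n:ℝ)+1) * x)) ^ 2
      = ∑ n ∈ S, ∑ m ∈ S, (c n * c m) * (cos (((n:ℝ)+1) * x) * cos (((m:ℝ)+1) * x)) := by
    intro x
    rw [sq, Finset.sum_mul_sum]
    refine Finset.sum_congr rfl fun n _ => Finset.sum_congr rfl fun m _ => by ring
  simp_rw [h]
  rw [intervalIntegral.integral_finsetSum
    (fun n _ => Continuous.intervalIntegrable (by fun_prop) _ _), Finset.mul_sum]
  refine Finset.sum_congr rfl fun n hn => ?_
  rw [intervalIntegral.integral_finsetSum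
    (fun n _ => Continuous.intervalIntegrable (by fun_prop) _ _)]
  simp_rw [intervalIntegral.integral_const_mul, vk_orth]
  simp [hn]; ring

lemma vk_bound (S : Finset ℕ) (c : ℕ → ℝ) (g : ℝ → ℝ) (hg : ContinuousOn g (Icc 0 π))
    (M : ℝ) (hM : ∀ x ∈ Icc 0 π, |g x| ≤ M) (δ : ℝ) (hδ : 0 < δ) :
    |∑ n ∈ S, c n * ∫ x in (0:ℝ)..π, g x * cos (((n:ℝ)+1) * x)|
      ≤ M * (π / 2) * (δ + (1 / δ) * ∑ n ∈ S, c n ^ 2) := by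
  have hM0 : 0 ≤ M := (abs_nonneg _).trans (hM 0 ⟨le_rfl, pi_pos.le⟩)
  have hgi : ∀ h : ℝ → ℝ, Continuous h →
      IntervalIntegrable (fun x => g x * h x) MeasureTheory.volume 0 π := by
    intro h hh
    apply ContinuousOn.intervalIntegrable
    rw [uIcc_of_le pi_pos.le]
    exact hg.mul hh.continuousOn
  have e : ∑ n ∈ S, c n * ∫ x in (0:ℝ)..π, g x * cos (((n:ℝ)+1) * x)
      = ∫ x in (0:ℝ)..π, g x * ∑ n ∈ S, c n * cos (((n:ℝ)+1) * x) := by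
    simp_rw [← intervalIntegral.integral_const_mul]
    rw [← intervalIntegral.integral_finsetSum]
    · refine intervalIntegral.integral_congr fun x _ => ?_
      simp only [Finset.mul_sum]
      refine Finset.sum_congr rfl fun n _ => by ring
    · intro n _
      exact (hgi _ (by fun_prop)).const_mul _
  rw [e]
  have hc : Continuous fun x : ℝ => ∑ n ∈ S, c n * cos (((n:ℝ)+1) * x) := by fun_prop
  have i2 : ∫ x in (0:ℝ)..π, M * ((1/2) * δ + (1/(2*δ)) * (∑ n ∈ S, c n * cos (((n:ℝ)+1) * x)) ^ 2)
      = M * (π / 2) * (δ + (1 / δ) * ∑ n ∈ S, c n ^ 2) - M * (π/4) * (1/δ) * ∑ n ∈ S, c n ^ 2 := by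
    rw [intervalIntegral.integral_const_mul, intervalIntegral.integral_add
      (Continuous.intervalIntegrable (by fun_prop) _ _)
      (Continuous.intervalIntegrable (by fun_prop) _ _),
      intervalIntegral.integral_const_mul, intervalIntegral.integral_const_mul, vk_h2,
      intervalIntegral.integral_const]
    simp only [smul_eq_mul]
    field_simp
    ring
  have i3 : 0 ≤ M * (π/4) * (1/δ) * ∑ n ∈ S, c n ^ 2 := by
    have := Finset.sum_nonneg (s := S) (f := fun n => c n ^ 2) (fun _ _ => sq_nonneg _)
    positivity
  refine le_trans ?_ (i2.le.trans (by linarith))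
  refine (intervalIntegral.abs_integral_le_integral_abs pi_pos.le).trans ?_
  refine intervalIntegral.integral_mono_on pi_pos.le (hgi _ hc).abs
    (Continuous.intervalIntegrable (by fun_prop) _ _) fun x hx => ?_
  rw [abs_mul]
  refine mul_le_mul (hM x hx) ?_ (abs_nonneg _) hM0
  set y := ∑ n ∈ S, c n * cos (((n:ℝ)+1) * x)
  have : (1/2) * δ + (1/(2*δ)) * y^2 - |y| = (1/(2*δ)) * (δ - |y|)^2 := by
    rw [sub_sq, sq_abs]; field_simp; ring
  have : 0 ≤ (1/(2*δ)) * (δ - |y|)^2 := by positivity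
  linarith

lemma vk_parts_sin (u u' : ℝ → ℝ) (hu : ∀ x ∈ Icc (0:ℝ) π, HasDerivWithinAt u (u' x) (Icc 0 π) x)
    (hu' : ContinuousOn u' (Icc 0 π)) (h0 : u 0 = 0) (h1 : u π = 0) (n : ℕ) :
    ∫ x in (0:ℝ)..π, u x * sin (((n:ℝ)+1) * x)
      = (1/((n:ℝ)+1)) * ∫ x in (0:ℝ)..π, u' x * cos (((n:ℝ)+1) * x) := by
  have hn : (n:ℝ)+1 ≠ 0 := by positivity
  have hI := uIcc_of_le pi_pos.le
  have := intervalIntegral.integral_mul_deriv_eq_deriv_mul_of_hasDerivWithinAt (a := 0) (b := π)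
    (u := u) (u' := u') (v := fun x => -(1/((n:ℝ)+1)) * cos (((n:ℝ)+1) * x))
    (v' := fun x => sin (((n:ℝ)+1) * x)) (by rw [hI]; exact hu)
    (by
      intro x _
      have h := (((hasDerivAt_id x).const_mul ((n:ℝ)+1)).cos.const_mul (-(1/((n:ℝ)+1))))
      simp only [id] at h
      refine (h.congr_deriv ?_).hasDerivWithinAt
      field_simp)
    (ContinuousOn.intervalIntegrable (by rw [hI]; exact hu'))
    (Continuous.intervalIntegrable (by fun_prop) _ _)
  rw [this, h0, h1, ← intervalIntegral.integral_const_mul, zero_mul, zero_mul, sub_zero, zero_sub,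
    ← intervalIntegral.integral_neg]
  refine intervalIntegral.integral_congr fun x _ => ?_
  ring

lemma vk_parts_cos (u u' : ℝ → ℝ) (hu : ∀ x ∈ Icc (0:ℝ) π, HasDerivWithinAt u (u' x) (Icc 0 π) x)
    (hu' : ContinuousOn u' (Icc 0 π)) (n : ℕ) :
    ∫ x in (0:ℝ)..π, u x * cos (((n:ℝ)+1) * x)
      = -(1/((n:ℝ)+1)) * ∫ x in (0:ℝ)..π, u' x * sin (((n:ℝ)+1) * x) := by
  have hn : (n:ℝ)+1 ≠ 0 := by positivity
  have hI := uIcc_of_le pi_pos.le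
  have := intervalIntegral.integral_mul_deriv_eq_deriv_mul_of_hasDerivWithinAt (a := 0) (b := π)
    (u := u) (u' := u') (v := fun x => (1/((n:ℝ)+1)) * sin (((n:ℝ)+1) * x))
    (v' := fun x => cos (((n:ℝ)+1) * x)) (by rw [hI]; exact hu)
    (by
      intro x _
      have h := (((hasDerivAt_id x).const_mul ((n:ℝ)+1)).sin.const_mul ((1/((n:ℝ)+1))))
      simp only [id] at h
      refine (h.congr_deriv ?_).hasDerivWithinAt
      field_simp)
    (ContinuousOn.intervalIntegrable (by rw [hI]; exact hu'))
    (Continuous.intervalIntegrable (by fun_prop) _ _)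
  have hs : sin (((n:ℝ)+1) * π) = 0 := by exact_mod_cast sin_nat_mul_pi (n+1)
  rw [this, hs, ← intervalIntegral.integral_const_mul]
  simp only [mul_zero, sin_zero, sub_zero, zero_sub]
  rw [← intervalIntegral.integral_neg]
  refine intervalIntegral.integral_congr fun x _ => ?_
  ring

/-- The kernel series `K(t,s) = −Σ n² f_n(s) e^{-n²(t-s)} sin(n x₀)` converges uniformly
on the triangle `{0 ≤ s ≤ t ≤ T}` and `K` is continuous there. -/
theorem volterra_kernel_continuous
    (T : ℝ) (hT : 0 < T)
    (f f1 f2 f3 : ℝ → ℝ → ℝ)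
    (hfc : ContinuousOn (fun p : ℝ × ℝ => f p.1 p.2) (Icc 0 π ×ˢ Icc 0 T))
    (hf1c : ContinuousOn (fun p : ℝ × ℝ => f1 p.1 p.2) (Icc 0 π ×ˢ Icc 0 T))
    (hf2c : ContinuousOn (fun p : ℝ × ℝ => f2 p.1 p.2) (Icc 0 π ×ˢ Icc 0 T))
    (hf3c : ContinuousOn (fun p : ℝ × ℝ => f3 p.1 p.2) (Icc 0 π ×ˢ Icc 0 T))
    (hd1 : ∀ t ∈ Icc (0:ℝ) T, ∀ x ∈ Icc (0:ℝ) π,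
      HasDerivWithinAt (fun x' => f x' t) (f1 x t) (Icc 0 π) x)
    (hd2 : ∀ t ∈ Icc (0:ℝ) T, ∀ x ∈ Icc (0:ℝ) π,
      HasDerivWithinAt (fun x' => f1 x' t) (f2 x t) (Icc 0 π) x)
    (hd3 : ∀ t ∈ Icc (0:ℝ) T, ∀ x ∈ Icc (0:ℝ) π,
      HasDerivWithinAt (fun x' => f2 x' t) (f3 x t) (Icc 0 π) x)
    (hfb : ∀ t ∈ Icc (0:ℝ) T, f 0 t = 0 ∧ f π t = 0 ∧ f2 0 t = 0 ∧ f2 π t = 0)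
    (fn : ℕ → ℝ → ℝ)
    (hfn : ∀ n t, fn n t = (2 / π) * ∫ s in (0:ℝ)..π, f s t * sin ((n:ℝ) * s))
    (x₀ : ℝ) (hx₀ : x₀ ∈ Ioo 0 π)
    (K : ℝ → ℝ → ℝ)
    (hK : ∀ t s, K t s = -∑' n : ℕ, ((n:ℝ) + 1) ^ 2 * fn (n + 1) s *
      exp (-((n:ℝ) + 1) ^ 2 * (t - s)) * sin (((n:ℝ) + 1) * x₀)) :
    -- pointwise summability and uniform convergence on the triangle
    (∀ t s : ℝ, 0 ≤ s → s ≤ t → t ≤ T →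
      Summable fun n : ℕ => ((n:ℝ) + 1) ^ 2 * fn (n + 1) s *
        exp (-((n:ℝ) + 1) ^ 2 * (t - s)) * sin (((n:ℝ) + 1) * x₀)) ∧
    (∀ ε > 0, ∃ N₀ : ℕ, ∀ m ≥ N₀, ∀ t s : ℝ, 0 ≤ s → s ≤ t → t ≤ T →
      |(-∑ n ∈ Finset.range m, ((n:ℝ) + 1) ^ 2 * fn (n + 1) s *
          exp (-((n:ℝ) + 1) ^ 2 * (t - s)) * sin (((n:ℝ) + 1) * x₀)) - K t s| ≤ ε) ∧
    -- continuity of `K` on the triangle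
    ContinuousOn (fun q : ℝ × ℝ => K q.1 q.2)
      {q : ℝ × ℝ | 0 ≤ q.2 ∧ q.2 ≤ q.1 ∧ q.1 ≤ T} := by
  have slice : ∀ g : ℝ → ℝ → ℝ,
      ContinuousOn (fun p : ℝ × ℝ => g p.1 p.2) (Icc 0 π ×ˢ Icc 0 T) →
      ∀ t ∈ Icc (0:ℝ) T, ContinuousOn (fun x => g x t) (Icc 0 π) := by
    intro g hg t ht
    exact hg.comp (f := fun x : ℝ => (x, t)) (by fun_prop) (fun x hx => ⟨hx, ht⟩)
  have hcoef : ∀ s ∈ Icc (0:ℝ) T, ∀ n : ℕ, ((n:ℝ)+1)^2 * fn (n+1) s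
      = -(2/π) * (1/((n:ℝ)+1)) * ∫ x in (0:ℝ)..π, f3 x s * cos (((n:ℝ)+1) * x) := by
    intro s hs n
    obtain ⟨b1, b2, b3, b4⟩ := hfb s hs
    have hn : (n:ℝ)+1 ≠ 0 := by positivity
    rw [hfn]; push_cast
    rw [vk_parts_sin (fun x => f x s) (fun x => f1 x s) (hd1 s hs) (slice f1 hf1c s hs) b1 b2,
      vk_parts_cos (fun x => f1 x s) (fun x => f2 x s) (hd2 s hs) (slice f2 hf2c s hs),
      vk_parts_sin (fun x => f2 x s) (fun x => f3 x s) (hd3 s hs) (slice f3 hf3c s hs) b3 b4]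
    field_simp
  obtain ⟨M, hM⟩ := (isCompact_Icc.prod isCompact_Icc).exists_bound_of_continuousOn hf3c
  have hM0 : 0 ≤ M := (norm_nonneg _).trans (hM (0, 0) ⟨⟨le_rfl, pi_pos.le⟩, ⟨le_rfl, hT.le⟩⟩)
  have hsum : Summable fun n : ℕ => (1 / ((n:ℝ)+1)) ^ 2 := by
    have := (summable_nat_add_iff 1).2 (Real.summable_one_div_nat_pow.2 (by norm_num : 1 < 2))
    simpa using this
  have key : ∀ ε > 0, ∃ s0 : Finset ℕ, ∀ S : Finset ℕ, Disjoint S s0 → ∀ t s : ℝ,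
      0 ≤ s → s ≤ t → t ≤ T → |∑ n ∈ S, ((n:ℝ) + 1) ^ 2 * fn (n + 1) s *
        exp (-((n:ℝ) + 1) ^ 2 * (t - s)) * sin (((n:ℝ) + 1) * x₀)| < ε := by
    intro ε hε
    obtain ⟨δ, hδ, hδε⟩ : ∃ δ > 0, 2 * M * δ < ε := by
      refine ⟨ε / (2 * M + 1), by positivity, ?_⟩
      rw [mul_div_assoc', div_lt_iff₀ (by positivity)]
      nlinarith
    obtain ⟨s0, hs0⟩ := summable_iff_vanishing_norm.1 hsum (δ^2) (by positivity)
    refine ⟨s0, fun S hS t s h0 hst htT => ?_⟩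
    have hs : s ∈ Icc 0 T := ⟨h0, hst.trans htT⟩
    set w : ℕ → ℝ := fun n => exp (-((n:ℝ) + 1) ^ 2 * (t - s)) * sin (((n:ℝ) + 1) * x₀) with hw
    have hw1 : ∀ n, |w n| ≤ 1 := by
      intro n
      rw [hw]; simp only [abs_mul, abs_exp]
      refine mul_le_one₀ (exp_le_one_iff.2 ?_) (abs_nonneg _) (abs_sin_le_one _)
      have := mul_nonneg (sq_nonneg ((n:ℝ)+1)) (sub_nonneg.2 hst)
      linarith
    have e : ∑ n ∈ S, ((n:ℝ) + 1) ^ 2 * fn (n + 1) s *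
        exp (-((n:ℝ) + 1) ^ 2 * (t - s)) * sin (((n:ℝ) + 1) * x₀)
        = -(2/π) * ∑ n ∈ S, (w n * (1/((n:ℝ)+1))) *
          ∫ x in (0:ℝ)..π, f3 x s * cos (((n:ℝ)+1) * x) := by
      rw [Finset.mul_sum]
      refine Finset.sum_congr rfl fun n _ => ?_
      rw [hcoef s hs n, hw]; ring
    have hb := vk_bound S (fun n => w n * (1/((n:ℝ)+1))) (fun x => f3 x s) (slice f3 hf3c s hs) M
      (fun x hx => hM (x, s) ⟨hx, hs⟩) δ hδ
    have h2 : ∑ n ∈ S, (w n * (1/((n:ℝ)+1)))^2 ≤ δ^2 := by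
      refine le_trans (Finset.sum_le_sum fun n _ => ?_) ((le_abs_self _).trans (hs0 S hS).le)
      rw [mul_pow]
      exact mul_le_of_le_one_left (sq_nonneg _) ((sq_le_one_iff_abs_le_one _).2 (hw1 n))
    rw [e, abs_mul, abs_neg, abs_of_pos (by positivity : 0 < 2/π)]
    refine lt_of_le_of_lt ?_ hδε
    calc _ ≤ 2/π * (M * (π / 2) * (δ + (1 / δ) * δ^2)) := by
            refine mul_le_mul_of_nonneg_left (hb.trans ?_) (by positivity)
            gcongr
      _ = 2 * M * δ := by field_simp; ring
  have c1 : ∀ t s : ℝ, 0 ≤ s → s ≤ t → t ≤ T →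
      Summable fun n : ℕ => ((n:ℝ) + 1) ^ 2 * fn (n + 1) s *
        exp (-((n:ℝ) + 1) ^ 2 * (t - s)) * sin (((n:ℝ) + 1) * x₀) := by
    intro t s h0 h1 h2
    rw [summable_iff_vanishing_norm]
    intro ε hε
    obtain ⟨s0, hs0⟩ := key ε hε
    exact ⟨s0, fun S hS => hs0 S hS t s h0 h1 h2⟩
  have c2 : ∀ ε > 0, ∃ N₀ : ℕ, ∀ m ≥ N₀, ∀ t s : ℝ, 0 ≤ s → s ≤ t → t ≤ T →
      |(-∑ n ∈ Finset.range m, ((n:ℝ) + 1) ^ 2 * fn (n + 1) s *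
          exp (-((n:ℝ) + 1) ^ 2 * (t - s)) * sin (((n:ℝ) + 1) * x₀)) - K t s| ≤ ε := by
    intro ε hε
    obtain ⟨s0, hs0⟩ := key ε hε
    refine ⟨s0.sup id + 1, fun m hm t s h0 h1 h2 => ?_⟩
    rw [hK]
    have ht := (c1 t s h0 h1 h2).hasSum.tendsto_sum_nat
    have ht2 := (ht.sub_const (∑ n ∈ Finset.range m, ((n:ℝ) + 1) ^ 2 * fn (n + 1) s *
          exp (-((n:ℝ) + 1) ^ 2 * (t - s)) * sin (((n:ℝ) + 1) * x₀))).abs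
    rw [neg_sub_neg]
    refine le_of_tendsto ht2 ?_
    filter_upwards [Filter.eventually_ge_atTop m] with k hk
    rw [← Finset.sum_Ico_eq_sub _ hk]
    refine (hs0 _ ?_ t s h0 h1 h2).le
    rw [Finset.disjoint_left]
    intro a ha ha'
    have := Finset.le_sup (f := id) ha'
    simp only [id, Finset.mem_Ico] at this ha
    omega
  refine ⟨c1, c2, ?_⟩
  have hfnc : ∀ n, ContinuousOn (fn n) (Icc 0 T) := by
    intro n
    let P : ℝ → ℝ := fun x => projIcc 0 π pi_pos.le x
    let Q : ℝ → ℝ := fun x => projIcc 0 T hT.le x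
    have hP : Continuous P := continuous_subtype_val.comp continuous_projIcc
    have hQ : Continuous Q := continuous_subtype_val.comp continuous_projIcc
    have hF : Continuous fun p : ℝ × ℝ => f (P p.2) (Q p.1) :=
      hfc.comp_continuous (f := fun p : ℝ × ℝ => (P p.2, Q p.1)) (by fun_prop)
        (fun p => ⟨Subtype.coe_prop _, Subtype.coe_prop _⟩)
    have hG : Continuous fun t => (2/π) * ∫ s in (0:ℝ)..π, f (P s) (Q t) * sin ((n:ℝ) * s) := by
      refine continuous_const.mul ?_
      refine intervalIntegral.continuous_parametric_intervalIntegral_of_continuous'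
        (f := fun t s => f (P s) (Q t) * sin ((n:ℝ) * s)) ?_ 0 π
      exact hF.mul (by fun_prop)
    refine hG.continuousOn.congr fun t ht => ?_
    rw [hfn]
    congr 1
    refine intervalIntegral.integral_congr fun x hx => ?_
    rw [uIcc_of_le pi_pos.le] at hx
    simp only [P, Q, projIcc_of_mem _ hx, projIcc_of_mem _ ht]
  have hu : TendstoUniformlyOn (fun (m : ℕ) (q : ℝ × ℝ) =>
      -∑ n ∈ Finset.range m, ((n:ℝ) + 1) ^ 2 * fn (n + 1) q.2 *
          exp (-((n:ℝ) + 1) ^ 2 * (q.1 - q.2)) * sin (((n:ℝ) + 1) * x₀))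
      (fun q : ℝ × ℝ => K q.1 q.2) Filter.atTop
      {q : ℝ × ℝ | 0 ≤ q.2 ∧ q.2 ≤ q.1 ∧ q.1 ≤ T} := by
    rw [Metric.tendstoUniformlyOn_iff]
    intro ε hε
    obtain ⟨N, hN⟩ := c2 (ε/2) (half_pos hε)
    filter_upwards [Filter.eventually_ge_atTop N] with m hm q hq
    rw [dist_comm, Real.dist_eq]
    exact (hN m hm q.1 q.2 hq.1 hq.2.1 hq.2.2).trans_lt (half_lt_self hε)
  refine hu.continuousOn (Filter.Eventually.frequently (Filter.Eventually.of_forall fun m => ?_))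
  refine ContinuousOn.neg (continuousOn_finsetSum _ fun n _ => ?_)
  have h1 : ContinuousOn (fun q : ℝ × ℝ => fn (n+1) q.2)
      {q : ℝ × ℝ | 0 ≤ q.2 ∧ q.2 ≤ q.1 ∧ q.1 ≤ T} :=
    (hfnc (n+1)).comp continuous_snd.continuousOn (fun q hq => ⟨hq.1, hq.2.1.trans hq.2.2⟩)
  have h2 : Continuous fun q : ℝ × ℝ => exp (-((n:ℝ) + 1) ^ 2 * (q.1 - q.2)) := by fun_prop
  exact ((continuousOn_const.mul h1).mul h2.continuousOn).mul continuousOn_const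
end
end

section
/- Let ψ ∈ C⁶([0,π]) satisfy ψ^{(2k)}(0) = ψ^{(2k)}(π) = 0 for k = 0,1,2, with sine coefficients ψ_n := (2/π)∫₀^π ψ(s) sin(ns) ds. Assume Λ_n ≠ 0 for all n ≥ 1. Then the series f̃(x) := Σ_{n≥1} (ψ_n/Λ_n) sin(nx) converges to a function f̃ ∈ C³([0,π]) with f̃(0) = f̃(π) = f̃''(0) = f̃''(π) = 0. -/
open Real Set

noncomputable section

theorem aux_cos_int (m : ℤ) (hm : m ≠ 0) : ∫ x in (0:ℝ)..π, cos ((m:ℝ) * x) = 0 := by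
  have hm' : (m:ℝ) ≠ 0 := by exact_mod_cast hm
  rw [intervalIntegral.integral_comp_mul_left (fun x => cos x) hm', integral_cos]
  simp [Real.sin_int_mul_pi]

theorem aux_orth (j k : ℕ) :
    ∫ x in (0:ℝ)..π, sin (((j:ℝ) + 1) * x) * sin (((k:ℝ) + 1) * x)
      = if j = k then π / 2 else 0 := by
  have h : ∀ x : ℝ, sin (((j:ℝ) + 1) * x) * sin (((k:ℝ) + 1) * x)
      = (1/2) * (cos ((((j:ℤ) - (k:ℤ) : ℤ) : ℝ) * x) - cos ((((j:ℤ) + k + 2 : ℤ) : ℝ) * x)) := by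
    intro x
    have e1 : ((((j:ℤ) - (k:ℤ) : ℤ) : ℝ) * x) = ((j:ℝ) + 1) * x - ((k:ℝ) + 1) * x := by
      push_cast; ring
    have e2 : ((((j:ℤ) + k + 2 : ℤ) : ℝ) * x) = ((j:ℝ) + 1) * x + ((k:ℝ) + 1) * x := by
      push_cast; ring
    rw [e1, e2, cos_sub, cos_add]; ring
  simp_rw [h]
  rw [intervalIntegral.integral_const_mul, intervalIntegral.integral_sub
    (Continuous.intervalIntegrable (by fun_prop) _ _)
    (Continuous.intervalIntegrable (by fun_prop) _ _),
    aux_cos_int ((j:ℤ) + k + 2) (by omega)]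
  split_ifs with hjk
  · subst hjk
    simp; ring
  · rw [aux_cos_int _ (by omega)]; simp

theorem aux_bessel (g : ℝ → ℝ) (hg : ContinuousOn g (Icc 0 π)) :
    Summable fun k : ℕ => (∫ x in (0:ℝ)..π, g x * sin (((k:ℝ) + 1) * x)) ^ 2 := by
  set a : ℕ → ℝ := fun k => ∫ x in (0:ℝ)..π, g x * sin (((k:ℝ) + 1) * x) with ha
  have hpi := Real.pi_pos
  have hgu : ContinuousOn g (uIcc 0 π) := by rwa [uIcc_of_le hpi.le]
  refine summable_of_sum_range_le (c := (π / 2) * ∫ x in (0:ℝ)..π, g x ^ 2)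
    (fun n => sq_nonneg _) (fun N => ?_)
  set S : ℝ → ℝ := fun x => ∑ k ∈ Finset.range N, (2 / π * a k) * sin (((k:ℝ) + 1) * x) with hS
  have hSc : Continuous S := by fun_prop
  have hgen : ∀ u : ℝ → ℝ, ContinuousOn u (uIcc 0 π) → ∫ x in (0:ℝ)..π, u x * S x =
      ∑ k ∈ Finset.range N, (2 / π * a k) * ∫ x in (0:ℝ)..π, u x * sin (((k:ℝ) + 1) * x) := by
    intro u hu
    simp only [hS, Finset.mul_sum]
    rw [intervalIntegral.integral_finsetSum]
    · refine Finset.sum_congr rfl fun k _ => ?_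
      rw [← intervalIntegral.integral_const_mul (2 / π * a k)
        (fun x => u x * sin (((k:ℝ) + 1) * x))]
      congr 1; ext x; ring
    · intro k _
      apply ContinuousOn.intervalIntegrable
      fun_prop
  have h1 := hgen g hgu
  have h2 := hgen S hSc.continuousOn
  have h3 : ∀ k ∈ Finset.range N, ∫ x in (0:ℝ)..π, S x * sin (((k:ℝ) + 1) * x) = a k := by
    intro k hk
    have := hgen (fun x => sin (((k:ℝ) + 1) * x)) (by fun_prop)
    simp_rw [aux_orth] at this
    simp_rw [mul_comm (S _)]
    rw [this]
    simp only [mul_ite, mul_zero, Finset.sum_ite_eq, hk, if_true]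
    field_simp
  have h4 : ∫ x in (0:ℝ)..π, (g x - S x) ^ 2 =
      (∫ x in (0:ℝ)..π, g x ^ 2) - 2 * (∫ x in (0:ℝ)..π, g x * S x)
        + ∫ x in (0:ℝ)..π, S x * S x := by
    rw [← intervalIntegral.integral_const_mul, ← intervalIntegral.integral_sub,
      ← intervalIntegral.integral_add]
    · congr 1; ext x; ring
    all_goals
      apply ContinuousOn.intervalIntegrable
      fun_prop
  have h5 : 0 ≤ ∫ x in (0:ℝ)..π, (g x - S x) ^ 2 :=
    intervalIntegral.integral_nonneg hpi.le fun x _ => sq_nonneg _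
  have h6 : ∑ k ∈ Finset.range N, (2 / π * a k) * ∫ x in (0:ℝ)..π, S x * sin (((k:ℝ) + 1) * x)
      = 2 / π * ∑ k ∈ Finset.range N, a k ^ 2 := by
    rw [Finset.mul_sum]
    refine Finset.sum_congr rfl fun k hk => ?_
    rw [h3 k hk]; ring
  have h7 : ∑ k ∈ Finset.range N, (2 / π * a k) * ∫ x in (0:ℝ)..π, g x * sin (((k:ℝ) + 1) * x)
      = 2 / π * ∑ k ∈ Finset.range N, a k ^ 2 := by
    rw [Finset.mul_sum]
    refine Finset.sum_congr rfl fun k hk => ?_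
    simp only [ha]; ring
  rw [h4, h1, h2, h6, h7] at h5
  have h8 : 2 / π * ∑ k ∈ Finset.range N, a k ^ 2 ≤ ∫ x in (0:ℝ)..π, g x ^ 2 := by linarith
  calc ∑ k ∈ Finset.range N, a k ^ 2 = (π / 2) * (2 / π * ∑ k ∈ Finset.range N, a k ^ 2) := by
        field_simp
    _ ≤ _ := by gcongr

theorem aux_parts (n : ℕ) (u u1 u2 : ℝ → ℝ)
    (h1 : ∀ x ∈ Icc (0:ℝ) π, HasDerivWithinAt u (u1 x) (Icc 0 π) x)
    (h2 : ∀ x ∈ Icc (0:ℝ) π, HasDerivWithinAt u1 (u2 x) (Icc 0 π) x)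
    (h2c : ContinuousOn u2 (Icc 0 π)) (h0 : u 0 = 0) (hp : u π = 0) :
    ∫ x in (0:ℝ)..π, u2 x * sin (((n:ℝ) + 1) * x)
      = -((n:ℝ) + 1) ^ 2 * ∫ x in (0:ℝ)..π, u x * sin (((n:ℝ) + 1) * x) := by
  have hpi := Real.pi_pos
  have hI : uIcc 0 π = Icc 0 π := uIcc_of_le hpi.le
  have h1c : ContinuousOn u1 (Icc 0 π) := fun x hx => (h2 x hx).continuousWithinAt
  set c : ℝ := (n:ℝ) + 1 with hc
  have hsin : sin (c * π) = 0 := by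
    have := Real.sin_nat_mul_pi (n + 1); push_cast at this; exact this
  have dlin : ∀ x : ℝ, HasDerivAt (fun x => c * x) c x := fun x => by
    simpa using (hasDerivAt_id x).const_mul c
  have e1 := intervalIntegral.integral_mul_deriv_eq_deriv_mul_of_hasDerivWithinAt
    (a := 0) (b := π) (u := u1) (u' := u2) (v := fun x => sin (c * x))
    (v' := fun x => cos (c * x) * c) (by rwa [hI])
    (fun x _ => ((dlin x).sin).hasDerivWithinAt)
    (ContinuousOn.intervalIntegrable (by rwa [hI]))
    (Continuous.intervalIntegrable (by fun_prop) _ _)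
  have e2 := intervalIntegral.integral_mul_deriv_eq_deriv_mul_of_hasDerivWithinAt
    (a := 0) (b := π) (u := u) (u' := u1) (v := fun x => cos (c * x))
    (v' := fun x => -sin (c * x) * c) (by rwa [hI])
    (fun x _ => ((dlin x).cos).hasDerivWithinAt)
    (ContinuousOn.intervalIntegrable (by rwa [hI]))
    (Continuous.intervalIntegrable (by fun_prop) _ _)
  simp only [h0, hp, hsin, mul_zero, sin_zero, zero_mul, sub_zero, zero_sub] at e1 e2
  have e1' : ∫ x in (0:ℝ)..π, u1 x * (cos (c * x) * c) = c * ∫ x in (0:ℝ)..π, u1 x * cos (c * x) := by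
    rw [← intervalIntegral.integral_const_mul]; congr 1; ext x; ring
  have e2' : ∫ x in (0:ℝ)..π, u x * (-sin (c * x) * c)
      = -c * ∫ x in (0:ℝ)..π, u x * sin (c * x) := by
    rw [← intervalIntegral.integral_const_mul]; congr 1; ext x; ring
  rw [e1'] at e1
  rw [e2'] at e2
  linear_combination e1 - c * e2

open Filter Topology MeasureTheory in
theorem aux_lambda (r0 : ℝ → ℝ) (t₀ : ℝ) (ht : 0 < t₀) (hr : ContinuousOn r0 (Icc 0 t₀)) :
    Tendsto (fun n : ℕ => ((n:ℝ) + 1) ^ 2 *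
      ∫ s in (0:ℝ)..t₀, exp (-((n:ℝ) + 1) ^ 2 * (t₀ - s)) * r0 s) atTop (𝓝 (r0 t₀)) := by
  have hN : Tendsto (fun n : ℕ => ((n:ℝ) + 1) ^ 2) atTop atTop :=
    (tendsto_pow_atTop two_ne_zero).comp
      (tendsto_atTop_add_const_right _ _ tendsto_natCast_atTop_atTop)
  have key := tendsto_setIntegral_peak_smul_of_integrableOn_of_tendsto (μ := volume)
    (s := Ioc 0 t₀) (t := Ioc 0 t₀) (x₀ := t₀) (l := atTop) (g := r0) (a := r0 t₀)
    (φ := fun (n : ℕ) s => ((n:ℝ) + 1) ^ 2 * exp (-((n:ℝ) + 1) ^ 2 * (t₀ - s)))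
    measurableSet_Ioc measurableSet_Ioc subset_rfl self_mem_nhdsWithin (by simp)
    (Eventually.of_forall fun n x _ => by positivity) ?_ ?_
    (Eventually.of_forall fun n => Continuous.aestronglyMeasurable (by fun_prop))
    ((hr.integrableOn_Icc).mono_set Ioc_subset_Icc_self)
    ((hr t₀ (right_mem_Icc.2 ht.le)).mono Ioc_subset_Icc_self)
  · refine key.congr fun n => ?_
    rw [intervalIntegral.integral_of_le ht.le, ← integral_const_mul]
    congr 1; ext s; simp [mul_assoc]
  · intro u hu hxu
    obtain ⟨δ, hδ, hball⟩ := Metric.isOpen_iff.1 hu t₀ hxu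
    have h0 : Tendsto (fun n : ℕ => ((n:ℝ) + 1) ^ 2 * exp (-((n:ℝ) + 1) ^ 2 * δ)) atTop (𝓝 0) := by
      have h := (tendsto_rpow_mul_exp_neg_mul_atTop_nhds_zero 1 δ hδ).comp hN
      refine h.congr fun n => ?_
      simp only [Function.comp, rpow_one]
      congr 2; ring
    rw [Metric.tendstoUniformlyOn_iff]
    intro ε hε
    filter_upwards [h0.eventually (gt_mem_nhds hε)] with n hn x hx
    have hxd : δ ≤ t₀ - x := by
      by_contra hcon
      push Not at hcon
      apply hx.2
      apply hball
      rw [Metric.mem_ball, Real.dist_eq, abs_lt]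
      constructor <;> linarith [hx.1.2]
    simp only [Pi.zero_apply, dist_zero_left, Real.norm_eq_abs]
    rw [abs_of_nonneg (by positivity)]
    refine lt_of_le_of_lt ?_ hn
    have : 0 ≤ ((n:ℝ) + 1) ^ 2 := by positivity
    gcongr ?_ * exp ?_
    nlinarith
  · have hi : ∀ n : ℕ, ∫ x in Ioc 0 t₀, ((n:ℝ) + 1) ^ 2 * exp (-((n:ℝ) + 1) ^ 2 * (t₀ - x))
        = 1 - exp (-(((n:ℝ) + 1) ^ 2 * t₀)) := by
      intro n
      rw [← intervalIntegral.integral_of_le ht.le]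
      rw [intervalIntegral.integral_eq_sub_of_hasDerivAt
        (f := fun x => exp (-((n:ℝ) + 1) ^ 2 * (t₀ - x)))]
      · simp
      · intro x _
        have h1 : HasDerivAt (fun x => -((n:ℝ) + 1) ^ 2 * (t₀ - x)) (-((n:ℝ) + 1) ^ 2 * (-1)) x :=
          ((hasDerivAt_id x).const_sub t₀).const_mul _
        exact h1.exp.congr_deriv (by ring)
      · exact Continuous.intervalIntegrable (by fun_prop) _ _
    simp_rw [hi]
    have : Tendsto (fun n : ℕ => exp (-(((n:ℝ) + 1) ^ 2 * t₀))) atTop (𝓝 0) :=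
      tendsto_exp_neg_atTop_nhds_zero.comp (hN.atTop_mul_const ht)
    simpa using this.const_sub 1

theorem aux_dsin (a : ℕ → ℝ) (h : Summable fun n : ℕ => |a n| * ((n:ℝ) + 1)) (x : ℝ) :
    HasDerivAt (fun x => ∑' n : ℕ, a n * sin (((n:ℝ) + 1) * x))
      (∑' n : ℕ, (a n * ((n:ℝ) + 1)) * cos (((n:ℝ) + 1) * x)) x := by
  refine hasDerivAt_tsum (𝕜 := ℝ) (F := ℝ)
    (g := fun n x => a n * sin (((n:ℝ) + 1) * x))
    (g' := fun n x => (a n * ((n:ℝ) + 1)) * cos (((n:ℝ) + 1) * x)) h (fun n y => ?_) (fun n y => ?_) (y₀ := (0:ℝ)) ?_ x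
  · have d : HasDerivAt (fun x => ((n:ℝ) + 1) * x) ((n:ℝ) + 1) y := by
      simpa using (hasDerivAt_id y).const_mul ((n:ℝ) + 1)
    exact ((d.sin).const_mul (a n)).congr_deriv (by ring)
  · rw [Real.norm_eq_abs, abs_mul, abs_mul, abs_of_nonneg (by positivity : (0:ℝ) ≤ (n:ℝ) + 1)]
    exact mul_le_of_le_one_right (by positivity) (abs_cos_le_one _)
  · simp

theorem aux_dcos (a : ℕ → ℝ) (h : Summable fun n : ℕ => |a n| * ((n:ℝ) + 1)) (x : ℝ) :
    HasDerivAt (fun x => ∑' n : ℕ, a n * cos (((n:ℝ) + 1) * x))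
      (∑' n : ℕ, (-a n * ((n:ℝ) + 1)) * sin (((n:ℝ) + 1) * x)) x := by
  refine hasDerivAt_tsum (𝕜 := ℝ) (F := ℝ)
    (g := fun n x => a n * cos (((n:ℝ) + 1) * x))
    (g' := fun n x => (-a n * ((n:ℝ) + 1)) * sin (((n:ℝ) + 1) * x)) h (fun n y => ?_) (fun n y => ?_) (y₀ := (0:ℝ)) ?_ x
  · have d : HasDerivAt (fun x => ((n:ℝ) + 1) * x) ((n:ℝ) + 1) y := by
      simpa using (hasDerivAt_id y).const_mul ((n:ℝ) + 1)
    exact ((d.cos).const_mul (a n)).congr_deriv (by ring)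
  · rw [Real.norm_eq_abs, abs_mul, abs_mul, abs_neg,
      abs_of_nonneg (by positivity : (0:ℝ) ≤ (n:ℝ) + 1)]
    exact mul_le_of_le_one_right (by positivity) (abs_sin_le_one _)
  · refine Summable.of_norm_bounded h fun n => ?_
    simp only [mul_zero, cos_zero, mul_one, Real.norm_eq_abs]
    exact le_mul_of_one_le_right (abs_nonneg _) (by linarith [(Nat.cast_nonneg n : (0:ℝ) ≤ n)])

theorem aux_sin_pi (n : ℕ) : sin (((n:ℝ) + 1) * π) = 0 := by
  have := Real.sin_nat_mul_pi (n + 1); push_cast at this; exact this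

/-- For `ψ ∈ C⁶([0,π])` with `ψ^{(2k)}(0) = ψ^{(2k)}(π) = 0`, `k = 0,1,2`, and `Λ_n ≠ 0`
for all `n ≥ 1`, the series `f̃(x) = Σ (ψ_n/Λ_n) sin nx` converges to a `C³` function
with `f̃(0) = f̃(π) = f̃''(0) = f̃''(π) = 0`. -/
theorem ftilde_regularity
    (T : ℝ) (hT : 0 < T)
    (r0 : ℝ → ℝ) (hr0 : ContinuousOn r0 (Icc 0 T))
    (t₀ : ℝ) (ht₀ : t₀ ∈ Ioc 0 T) (hr0t₀ : r0 t₀ ≠ 0)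
    (Λ : ℕ → ℝ)
    (hΛ : ∀ n : ℕ, Λ n = ∫ s in (0:ℝ)..t₀, exp (-(n:ℝ) ^ 2 * (t₀ - s)) * r0 s)
    (hΛne : ∀ n : ℕ, 1 ≤ n → Λ n ≠ 0)
    -- `ψ ∈ C⁶([0,π])` with the boundary conditions
    (ψ ψ1 ψ2 ψ3 ψ4 ψ5 ψ6 : ℝ → ℝ)
    (hψ1 : ∀ x ∈ Icc (0:ℝ) π, HasDerivWithinAt ψ (ψ1 x) (Icc 0 π) x)
    (hψ2 : ∀ x ∈ Icc (0:ℝ) π, HasDerivWithinAt ψ1 (ψ2 x) (Icc 0 π) x)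
    (hψ3 : ∀ x ∈ Icc (0:ℝ) π, HasDerivWithinAt ψ2 (ψ3 x) (Icc 0 π) x)
    (hψ4 : ∀ x ∈ Icc (0:ℝ) π, HasDerivWithinAt ψ3 (ψ4 x) (Icc 0 π) x)
    (hψ5 : ∀ x ∈ Icc (0:ℝ) π, HasDerivWithinAt ψ4 (ψ5 x) (Icc 0 π) x)
    (hψ6 : ∀ x ∈ Icc (0:ℝ) π, HasDerivWithinAt ψ5 (ψ6 x) (Icc 0 π) x)
    (hψ6c : ContinuousOn ψ6 (Icc 0 π))
    (hψb : ψ 0 = 0 ∧ ψ π = 0 ∧ ψ2 0 = 0 ∧ ψ2 π = 0 ∧ ψ4 0 = 0 ∧ ψ4 π = 0)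
    (ψc : ℕ → ℝ)
    (hψc : ∀ n : ℕ, ψc n = (2 / π) * ∫ s in (0:ℝ)..π, ψ s * sin ((n:ℝ) * s))
    (ftilde : ℝ → ℝ)
    (hft : ∀ x, ftilde x = ∑' n : ℕ, ψc (n + 1) / Λ (n + 1) * sin (((n:ℝ) + 1) * x)) :
    -- the series converges ...
    (∀ x ∈ Icc (0:ℝ) π,
      Summable fun n : ℕ => ψc (n + 1) / Λ (n + 1) * sin (((n:ℝ) + 1) * x)) ∧
    -- ... to a `C³` function with the boundary conditions
    ∃ g1 g2 g3 : ℝ → ℝ,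
      (∀ x ∈ Icc (0:ℝ) π, HasDerivWithinAt ftilde (g1 x) (Icc 0 π) x) ∧
      (∀ x ∈ Icc (0:ℝ) π, HasDerivWithinAt g1 (g2 x) (Icc 0 π) x) ∧
      (∀ x ∈ Icc (0:ℝ) π, HasDerivWithinAt g2 (g3 x) (Icc 0 π) x) ∧
      ContinuousOn g3 (Icc 0 π) ∧
      ftilde 0 = 0 ∧ ftilde π = 0 ∧ g2 0 = 0 ∧ g2 π = 0 := by
  have hpi := Real.pi_pos
  obtain ⟨hb0, hb1, hb2, hb3, hb4, hb5⟩ := hψb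
  set a : ℕ → ℝ := fun n => ψc (n + 1) / Λ (n + 1) with ha
  set σ : ℕ → ℝ := fun n => ∫ x in (0:ℝ)..π, ψ6 x * sin (((n:ℝ) + 1) * x) with hσ
  have hσs : Summable fun n => σ n ^ 2 := aux_bessel ψ6 hψ6c
  have hc2 : ContinuousOn ψ2 (Icc 0 π) := fun x hx => (hψ3 x hx).continuousWithinAt
  have hc4 : ContinuousOn ψ4 (Icc 0 π) := fun x hx => (hψ5 x hx).continuousWithinAt
  have hcoef : ∀ n : ℕ, σ n = -((n:ℝ) + 1) ^ 6 * (π / 2 * ψc (n + 1)) := by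
    intro n
    have e1 := aux_parts n ψ ψ1 ψ2 hψ1 hψ2 hc2 hb0 hb1
    have e2 := aux_parts n ψ2 ψ3 ψ4 hψ3 hψ4 hc4 hb2 hb3
    have e3 := aux_parts n ψ4 ψ5 ψ6 hψ5 hψ6 hψ6c hb4 hb5
    have e4 := hψc (n + 1)
    push_cast at e4
    rw [e4]
    simp only [hσ]
    rw [e3, e2, e1]
    field_simp
  have hlim := aux_lambda r0 t₀ ht₀.1 (hr0.mono (Icc_subset_Icc_right ht₀.2))
  have hlim' : Filter.Tendsto (fun n : ℕ => ((n:ℝ) + 1) ^ 2 * Λ (n + 1)) Filter.atTop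
      (nhds (r0 t₀)) := by
    refine hlim.congr fun n => ?_
    rw [hΛ (n + 1)]; push_cast; rfl
  have hr : 0 < |r0 t₀| := abs_pos.2 hr0t₀
  have hev : ∀ᶠ n : ℕ in Filter.atTop, |r0 t₀| / 2 < |((n:ℝ) + 1) ^ 2 * Λ (n + 1)| :=
    hlim'.abs.eventually (lt_mem_nhds (by linarith))
  have hinv : Summable fun n : ℕ => (1 / ((n:ℝ) + 1)) ^ 2 := by
    have := (summable_nat_add_iff 1).2 (Real.summable_one_div_nat_pow.2 (one_lt_two))
    refine this.congr fun n => ?_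
    push_cast; rw [div_pow, one_pow]
  have hA3 : Summable fun n : ℕ => |a n| * ((n:ℝ) + 1) ^ 3 := by
    refine Summable.of_norm_bounded_eventually_nat
      (((hσs.add hinv).mul_left (2 / π * (2 / |r0 t₀|)))) ?_
    filter_upwards [hev] with n hn
    have hN : (0:ℝ) < (n:ℝ) + 1 := by positivity
    have hne := hΛne (n + 1) (by omega)
    rw [Real.norm_eq_abs, abs_of_nonneg (by positivity)]
    have e1 : |a n| * ((n:ℝ) + 1) ^ 3
        = 2 / π * (1 / |((n:ℝ) + 1) ^ 2 * Λ (n + 1)|) * (|σ n| * (1 / ((n:ℝ) + 1))) := by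
      have hL : 0 < |Λ (n + 1)| := abs_pos.2 hne
      rw [hcoef n]
      simp only [ha, abs_div, abs_mul, abs_neg, abs_pow, abs_of_pos hN, abs_of_pos hpi, abs_two]
      field_simp
    rw [e1]
    have e2 : 1 / |((n:ℝ) + 1) ^ 2 * Λ (n + 1)| ≤ 2 / |r0 t₀| := by
      rw [div_le_div_iff₀ (by linarith) hr]; linarith
    have e3 : |σ n| * (1 / ((n:ℝ) + 1)) ≤ σ n ^ 2 + (1 / ((n:ℝ) + 1)) ^ 2 := by
      rw [← sq_abs (σ n)]
      nlinarith [sq_nonneg (|σ n| - 1 / ((n:ℝ) + 1)), sq_nonneg (|σ n|),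
        sq_nonneg (1 / ((n:ℝ) + 1))]
    gcongr
  have hA : ∀ k : ℕ, k ≤ 3 → Summable fun n : ℕ => |a n| * ((n:ℝ) + 1) ^ k := by
    intro k hk
    refine Summable.of_nonneg_of_le (fun n => by positivity) (fun n => ?_) hA3
    have : (1:ℝ) ≤ (n:ℝ) + 1 := by linarith [(Nat.cast_nonneg n : (0:ℝ) ≤ n)]
    gcongr
  have habs : ∀ n : ℕ, |(n:ℝ) + 1| = (n:ℝ) + 1 := fun n => abs_of_nonneg (by positivity)
  have hfe : ftilde = fun x => ∑' n : ℕ, a n * sin (((n:ℝ) + 1) * x) := funext hft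
  refine ⟨fun x _ => ?_, fun x => ∑' n : ℕ, (a n * ((n:ℝ) + 1)) * cos (((n:ℝ) + 1) * x),
    fun x => ∑' n : ℕ, (-(a n * ((n:ℝ) + 1)) * ((n:ℝ) + 1)) * sin (((n:ℝ) + 1) * x),
    fun x => ∑' n : ℕ, ((-(a n * ((n:ℝ) + 1)) * ((n:ℝ) + 1)) * ((n:ℝ) + 1))
      * cos (((n:ℝ) + 1) * x), fun x _ => ?_, fun x _ => ?_, fun x _ => ?_, ?_, ?_, ?_, ?_, ?_⟩
  · refine Summable.of_norm_bounded (hA 0 (by norm_num)) fun n => ?_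
    rw [Real.norm_eq_abs, abs_mul, pow_zero]
    exact mul_le_mul_of_nonneg_left (abs_sin_le_one _) (abs_nonneg _)
  · rw [hfe]
    exact (aux_dsin a (by simpa using hA 1 (by norm_num)) x).hasDerivWithinAt
  · refine (aux_dcos _ ((hA 2 (by norm_num)).congr fun n => ?_) x).hasDerivWithinAt
    rw [abs_mul, habs]; ring
  · refine (aux_dsin _ (hA3.congr fun n => ?_) x).hasDerivWithinAt
    rw [abs_mul, abs_neg, abs_mul, habs]; ring
  · refine (continuous_tsum (fun n => by fun_prop) hA3 fun n x => ?_).continuousOn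
    rw [Real.norm_eq_abs, abs_mul, abs_mul, abs_mul, abs_neg, abs_mul, habs]
    calc _ ≤ |a n| * ((n:ℝ) + 1) * ((n:ℝ) + 1) * ((n:ℝ) + 1) * 1 := by
          gcongr; exact abs_cos_le_one _
      _ = _ := by ring
  · rw [hfe]; simp
  · rw [hfe]; simp [aux_sin_pi]
  · simp
  · simp [aux_sin_pi]
end
end
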